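/- Let 0 < c < 1 and let p : ℕ → [0,1] satisfy p(n)·n → c as n → ∞. Then asymptotically almost surely every connected component of G(n,p(n)) is either a tree or a unicyclic graph; that is, the probability of this event tends to 1 as n → ∞. -/

import Mathlib

/-!
A first moment argument. A connected component which is neither a tree nor unicyclic has more edges
than vertices, and such a component contains a path on `k` vertices together with two distinct
further edges, each joining one end of the path to a vertex of the path
(`HasPathWithTwoChords`, `hasPathWithTwoChords_of_component`). To see this, strip leaves until all
degrees are at least two (`hasPathWithTwoChords_of_card_lt`) and take a longest path: all
neighbours of its ends lie on it. The two ends then supply the two edges, unless the only extra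
edge found is the one joining both ends. In that case the path closes up to a cycle, which by
maximality and connectedness passes through all vertices, and which has a chord because there are
more edges than vertices (`hasPathWithTwoChords_of_two_le_degree`).

A given such configuration on `k` vertices has `k + 1` edges, so it is present with probability at
most `p ^ (k + 1)` (`gProb_subset_le`), and there are at most `n ^ k * k ^ 2` of them. Hence the
failure probability is at most `p * ∑ k, k ^ 2 * (n * p) ^ k`
(`gProb_hasPathWithTwoChords_le`). For large `n` we have `n * p ≤ r` for a fixed `r < 1`, so the
sum is bounded by a convergent series, and `p → 0`.
-/

open Filter Topology

/-- Probability weight of a given graph outcome in `G(n,p)`. -/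
noncomputable def gWeight (n : ℕ) (p : ℝ) (G : SimpleGraph (Fin n)) : ℝ :=
  p ^ G.edgeSet.ncard * (1 - p) ^ (n.choose 2 - G.edgeSet.ncard)

open scoped Classical in
/-- Probability of the event `A` under the binomial random graph `G(n,p)`. -/
noncomputable def gProb (n : ℕ) (p : ℝ) (A : SimpleGraph (Fin n) → Prop) : ℝ :=
  ∑ᶠ G : SimpleGraph (Fin n), if A G then gWeight n p G else 0

/-- Expectation of `f` under the binomial random graph `G(n,p)`. -/
noncomputable def gExp (n : ℕ) (p : ℝ) (f : SimpleGraph (Fin n) → ℝ) : ℝ :=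
  ∑ᶠ G : SimpleGraph (Fin n), gWeight n p G * f G

/-- A graph is unicyclic if it is connected and has as many edges as vertices
(equivalently, it is connected and contains exactly one cycle). -/
def IsUnicyclic {V : Type*} (G : SimpleGraph V) : Prop :=
  G.Connected ∧ G.edgeSet.ncard = Nat.card V

/-- The vertex set of the fragment of `G`: the union of the supports of the unicyclic
connected components of `G`. -/
def fragSet {V : Type*} (G : SimpleGraph V) : Set V :=
  {v | IsUnicyclic (G.induce (G.connectedComponentMk v).supp)}


/-! ### Dense components contain a path with two extra edges at its ends -/

/-- `G` contains a path, from `u` to `v`, and two distinct edges `ux` and `vy` outside the path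
whose other endpoints `x`, `y` lie on the path. Both edges may be incident to `u` (or to `v`), as
when `x = v`; a path with a single vertex is excluded by the adjacency conditions. -/
def HasPathWithTwoChords {V : Type*} (G : SimpleGraph V) : Prop :=
  ∃ (u v : V) (w : G.Walk u v) (x y : V), w.IsPath ∧ x ∈ w.support ∧ y ∈ w.support ∧
    G.Adj u x ∧ G.Adj v y ∧ s(u, x) ∉ w.edges ∧ s(v, y) ∉ w.edges ∧ s(u, x) ≠ s(v, y)

/-- The configuration is inherited from induced subgraphs. -/
lemma HasPathWithTwoChords.map {V W : Type*} {G : SimpleGraph V} {H : SimpleGraph W}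
    (f : G ↪g H) (h : HasPathWithTwoChords G) : HasPathWithTwoChords H := by
  obtain ⟨u, v, w, x, y, hw, hx, hy, hux, hvy, hux', hvy', hne⟩ := h
  have hinj : Function.Injective (Sym2.map f.toHom) := Sym2.map.injective f.injective
  refine ⟨_, _, w.map f.toHom, f x, f y, hw.map f.injective, ?_, ?_, f.map_adj_iff.2 hux,
    f.map_adj_iff.2 hvy, ?_, ?_, ?_⟩
  · rw [SimpleGraph.Walk.support_map]; exact List.mem_map_of_mem hx
  · rw [SimpleGraph.Walk.support_map]; exact List.mem_map_of_mem hy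
  · rw [SimpleGraph.Walk.edges_map]
    exact fun h => hux' ((List.mem_map_of_injective hinj (a := s(u, x))).1 h)
  · rw [SimpleGraph.Walk.edges_map]
    exact fun h => hvy' ((List.mem_map_of_injective hinj (a := s(v, y))).1 h)
  · exact fun h => hne (hinj (a₁ := s(u, x)) (a₂ := s(v, y)) h)

/-- A cycle with a chord `ab` suffices: rotate the cycle to start at `a` and remove its first edge
`aa'`. The remaining path from `a'` to `a` has the extra edges `a'a` and `ab`. -/
lemma hasPathWithTwoChords_of_isCycle {V : Type*} [DecidableEq V] {G : SimpleGraph V} {r a b : V}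
    (c : G.Walk r r) (hc : c.IsCycle) (ha : a ∈ c.support) (hb : b ∈ c.support)
    (hab : G.Adj a b) (he : s(a, b) ∉ c.edges) : HasPathWithTwoChords G := by
  have hc' : (c.rotate a ha).IsCycle := (SimpleGraph.Walk.isCycle_rotate ha).2 hc
  have he' : s(a, b) ∉ (c.rotate a ha).edges := fun h =>
    he (((c.rotate_edges a ha).perm.mem_iff).1 h)
  have hb' : b ∈ (c.rotate a ha).support := (c.mem_support_rotate_iff a ha).2 hb
  generalize c.rotate a ha = d at hc' he' hb'
  cases d with
  | nil => simp at hc'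
  | @cons _ a' _ h q =>
    rw [SimpleGraph.Walk.cons_isCycle_iff] at hc'
    simp only [SimpleGraph.Walk.edges_cons, List.mem_cons, not_or,
      SimpleGraph.Walk.support_cons] at he' hb'
    refine ⟨a', a, q, a, b, hc'.1, q.end_mem_support, ?_, h.symm, hab, ?_, he'.2, ?_⟩
    · exact hb'.resolve_left hab.ne'
    · rw [Sym2.eq_swap]; exact hc'.2
    · rw [Sym2.eq_swap]; exact Ne.symm he'.1

/-- The case of minimum degree at least two, by looking at a longest path. -/
lemma hasPathWithTwoChords_of_two_le_degree {V : Type*} [Fintype V] [DecidableEq V]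
    (G : SimpleGraph V) [DecidableRel G.Adj] (hconn : G.Connected) (hdeg : ∀ v, 2 ≤ G.degree v)
    (hcard : Fintype.card V < G.edgeFinset.card) : HasPathWithTwoChords G := by
  have := hconn.nonempty
  obtain ⟨u, v, p, hp, hmax⟩ :=
    SimpleGraph.Walk.exists_isPath_forall_isPath_length_le_length G
  have hu : ∀ x, G.Adj u x → x ∈ p.support := fun x hx => by
    by_contra hxp
    have := hmax _ _ (SimpleGraph.Walk.cons hx.symm p) (hp.cons hxp)
    simp at this
  have hv : ∀ x, G.Adj v x → x ∈ p.support := fun x hx => by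
    by_contra hxp
    have := hmax _ _ (p.concat hx) (hp.concat hxp hx)
    simp at this
  obtain ⟨x, hx, hxs⟩ := Finset.exists_mem_ne (s := G.neighborFinset u) (hdeg u) p.snd
  obtain ⟨y, hy, hys⟩ := Finset.exists_mem_ne (s := G.neighborFinset v) (hdeg v) p.penultimate
  rw [SimpleGraph.mem_neighborFinset] at hx hy
  have hxe : s(u, x) ∉ p.edges := fun h => hxs (hp.eq_snd_of_mem_edges h)
  have hye : s(v, y) ∉ p.edges := fun h => hys (hp.eq_penultimate_of_mem_edges h)
  by_cases hne : s(u, x) = s(v, y)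
  swap
  · exact ⟨u, v, p, x, y, hp, hu x hx, hv y hy, hx, hy, hxe, hye, hne⟩
  obtain ⟨rfl, rfl⟩ | ⟨rfl, rfl⟩ : (u = v ∧ x = y) ∨ (u = y ∧ x = v) := by simpa using hne
  · replace hp := (SimpleGraph.Walk.isPath_iff_nil.1 hp).eq_nil
    have := hu x hx
    simp only [hp, SimpleGraph.Walk.support_nil, List.mem_singleton] at this
    exact absurd this hx.ne'
  -- Both extra edges are the edge joining the ends of `p`, which closes `p` up to a cycle `c`.
  have hcyc : (SimpleGraph.Walk.cons hy p).IsCycle :=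
    (SimpleGraph.Walk.cons_isCycle_iff p hy).2 ⟨hp, hye⟩
  have hlen : (SimpleGraph.Walk.cons hy p).length = p.length + 1 := rfl
  generalize SimpleGraph.Walk.cons hy p = c at hcyc hlen
  -- An edge leaving `c` at `a`, appended to `c` cut open at `a`, would be a path longer than `p`.
  have hall : ∀ z, z ∈ c.support := by
    by_contra! hz
    obtain ⟨z, hz⟩ := hz
    obtain ⟨q⟩ := hconn.preconnected x z
    obtain ⟨d, -, hd1, hd2⟩ := q.exists_boundary_dart {z | z ∈ c.support} c.start_mem_support hz
    simp only [Set.mem_ofPred_eq] at hd1 hd2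
    have hc' := (SimpleGraph.Walk.isCycle_rotate hd1).2 hcyc
    have hl' := c.length_rotate d.fst hd1
    have hd' : d.snd ∉ (c.rotate d.fst hd1).support := fun h =>
      hd2 ((c.mem_support_rotate_iff _ hd1).1 h)
    generalize c.rotate d.fst hd1 = c' at hc' hl' hd'
    have hn := hc'.not_nil
    have h1 : d.snd ∉ c'.tail.support := fun h => hd' <| by
      rw [SimpleGraph.Walk.support_tail_of_not_nil _ hn] at h
      exact List.mem_of_mem_tail h
    have := hmax _ _ (c'.tail.concat d.adj) (hc'.isPath_tail.concat h1 d.adj)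
    have h2 := SimpleGraph.Walk.length_tail_add_one hn
    rw [SimpleGraph.Walk.length_concat] at this
    omega
  -- The graph has more edges than vertices, hence more than `c`, so `c` has a chord.
  have hlt : c.edges.toFinset.card < G.edgeFinset.card := by
    have h1 := List.toFinset_card_le c.edges
    rw [SimpleGraph.Walk.length_edges] at h1
    have h2 := hp.length_lt
    omega
  obtain ⟨e, he, he'⟩ := Finset.exists_mem_notMem_of_card_lt_card hlt
  induction e with | _ a b =>
  rw [SimpleGraph.mem_edgeFinset, SimpleGraph.mem_edgeSet] at he
  exact hasPathWithTwoChords_of_isCycle c hcyc (hall a) (hall b) he (by simpa using he')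

/-- Deleting a vertex of degree one preserves connectedness and the difference between the numbers
of edges and vertices, so induction on the number of vertices reduces to minimum degree two. -/
lemma hasPathWithTwoChords_of_card_lt (N : ℕ) : ∀ {V : Type*} [Fintype V] [DecidableEq V]
    (G : SimpleGraph V) [DecidableRel G.Adj], Fintype.card V = N → G.Connected →
    Fintype.card V < G.edgeFinset.card → HasPathWithTwoChords G := by
  induction N with
  | zero =>
    intro V _ _ G _ hN hconn
    have := hconn.nonempty
    exact absurd hN Fintype.card_ne_zero
  | succ N ih =>
    intro V _ _ G _ hN hconn hcard
    by_cases hdeg : ∀ v, 2 ≤ G.degree v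
    · exact hasPathWithTwoChords_of_two_le_degree G hconn hdeg hcard
    push Not at hdeg
    obtain ⟨v, hv⟩ := hdeg
    have hnt : Nontrivial V := by
      by_contra h
      rw [not_nontrivial_iff_subsingleton] at h
      have : G.edgeFinset = ∅ := by
        ext e
        induction e with | _ a b =>
        simp [Subsingleton.elim a b]
      simp [this] at hcard
    have hpos : 0 < G.degree v := 
      hconn.preconnected.minDegree_pos_of_nontrivial.trans_le (G.minDegree_le_degree v)
    have hv1 : G.degree v = 1 := by omega
    have h1 := hconn.induce_compl_singleton_of_degree_eq_one hv1
    have h2 := G.card_edgeFinset_induce_compl_singleton v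
    have h3 := G.card_edgeFinset_deleteIncidenceSet v
    have h4 : Fintype.card ({v}ᶜ : Set V) = Fintype.card V - 1 := by
      rw [Fintype.card_compl_set]; simp
    refine (ih (G.induce ({v}ᶜ : Set V)) (by omega) h1 ?_).map
      (SimpleGraph.Embedding.induce _)
    omega

lemma hasPathWithTwoChords_of_component {n : ℕ} (G : SimpleGraph (Fin n))
    (h : ¬ ∀ K : G.ConnectedComponent,
      (G.induce K.supp).IsTree ∨ IsUnicyclic (G.induce K.supp)) :
    HasPathWithTwoChords G := by
  classical
  simp only [IsUnicyclic] at h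
  push Not at h
  obtain ⟨K, hK1, hK2⟩ := h
  have hconn : (G.induce K.supp).Connected := K.maximal_connected_induce_supp.prop
  have h2 := hK2 hconn
  have h1 : ¬ (Nat.card (G.induce K.supp).edgeSet + 1 = Nat.card K.supp) := fun h =>
    hK1 (SimpleGraph.isTree_iff_connected_and_card.2 ⟨hconn, h⟩)
  have h3 := hconn.card_vert_le_card_edgeSet_add_one
  have h4 : (G.induce K.supp).edgeFinset.card = Nat.card (G.induce K.supp).edgeSet := by
    rw [Nat.card_eq_fintype_card, SimpleGraph.edgeFinset_card]
  rw [← Nat.card_coe_set_eq] at h2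
  refine (hasPathWithTwoChords_of_card_lt _ (G.induce K.supp) rfl hconn ?_).map
    (SimpleGraph.Embedding.induce _)
  rw [h4, ← Nat.card_eq_fintype_card]
  omega

/-! ### Encoding the configurations as edge sets -/

open scoped Classical in
/-- The edges of the configuration given by the vertex sequence `f 0, …, f m`: the pairs of
consecutive vertices, together with `f 0 – f i` and `f m – f j`. No injectivity of `f` is imposed,
so coincidences and loops may occur; genuine configurations have exactly `m + 2` edges. -/
noncomputable def chordEdges {n m : ℕ} (f : Fin (m + 1) → Fin n) (i j : Fin (m + 1)) :
    Finset (Sym2 (Fin n)) :=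
  insert s(f 0, f i) (insert s(f (Fin.last m), f j)
    (List.zipWith (s(·, ·)) (List.ofFn f) (List.ofFn f).tail).toFinset)

lemma HasPathWithTwoChords.exists_chordEdges {n : ℕ} {G : SimpleGraph (Fin n)}
    (h : HasPathWithTwoChords G) : ∃ m < n, ∃ (f : Fin (m + 1) → Fin n) (i j : Fin (m + 1)),
      (chordEdges f i j).card = m + 2 ∧ ↑(chordEdges f i j) ⊆ G.edgeSet := by
  classical
  obtain ⟨u, v, w, x, y, hw, hx, hy, hux, hvy, hux', hvy', hne⟩ := h
  have hlt : w.length < n := by simpa using hw.length_lt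
  obtain ⟨i, rfl, hi⟩ := SimpleGraph.Walk.mem_support_iff_exists_getVert.1 hx
  obtain ⟨j, rfl, hj⟩ := SimpleGraph.Walk.mem_support_iff_exists_getVert.1 hy
  have hsup : List.ofFn (fun k : Fin (w.length + 1) => w.getVert k) = w.support := by
    apply List.ext_getElem
    · simp
    · intro k h1 h2
      rw [List.getElem_ofFn, SimpleGraph.Walk.support_getElem_eq_getVert]
  have hF : chordEdges (fun k : Fin (w.length + 1) => w.getVert k) ⟨i, by omega⟩ ⟨j, by omega⟩ =
      insert s(u, w.getVert i) (insert s(v, w.getVert j) w.edges.toFinset) := by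
    rw [chordEdges, hsup, ← SimpleGraph.Walk.edges_eq_zipWith_support]
    simp
  refine ⟨w.length, hlt, fun k => w.getVert k, ⟨i, by omega⟩, ⟨j, by omega⟩, ?_, ?_⟩
  · rw [hF, Finset.card_insert_of_notMem, Finset.card_insert_of_notMem,
      List.toFinset_card_of_nodup hw.isTrail.edges_nodup, SimpleGraph.Walk.length_edges]
    · simpa using hvy'
    · simpa [not_or] using And.intro (by simpa using hne) hux'
  · rw [hF]
    intro e he
    simp only [Finset.coe_insert, Set.mem_insert_iff, List.coe_toFinset] at he
    obtain rfl | rfl | he := he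
    · exact hux
    · exact hvy
    · exact w.edges_subset_edgeSet he

/-! ### Probabilities in `G(n,p)` -/

open scoped Classical in
/-- Graphs on `Fin n` correspond to sets of edges of the complete graph. -/
lemma sum_graph_eq_sum_powerset {n : ℕ} (g : Finset (Sym2 (Fin n)) → ℝ) :
    ∑ G : SimpleGraph (Fin n), g G.edgeFinset =
      ∑ s ∈ (⊤ : SimpleGraph (Fin n)).edgeFinset.powerset, g s := by
  refine Finset.sum_nbij' (fun G => G.edgeFinset) (fun s => SimpleGraph.fromEdgeSet ↑s)
    ?_ ?_ ?_ ?_ ?_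
  · intro G _
    rw [Finset.mem_powerset]
    exact SimpleGraph.edgeFinset_mono le_top
  · simp
  · intro G _
    simp
  · intro s hs
    rw [Finset.mem_powerset] at hs
    apply Finset.coe_injective
    rw [SimpleGraph.coe_edgeFinset, SimpleGraph.edgeSet_fromEdgeSet]
    rw [sdiff_eq_left, Set.disjoint_left]
    intro e he
    have := hs he
    simpa using this
  · simp

lemma gWeight_nonneg {n : ℕ} {p : ℝ} (hp : p ∈ Set.Icc (0 : ℝ) 1) (G : SimpleGraph (Fin n)) :
    0 ≤ gWeight n p G :=
  mul_nonneg (pow_nonneg hp.1 _) (pow_nonneg (sub_nonneg.2 hp.2) _)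

open scoped Classical in
lemma gWeight_eq {n : ℕ} (p : ℝ) (G : SimpleGraph (Fin n)) :
    gWeight n p G = p ^ G.edgeFinset.card *
      (1 - p) ^ ((⊤ : SimpleGraph (Fin n)).edgeFinset.card - G.edgeFinset.card) := by
  rw [gWeight, SimpleGraph.card_edgeFinset_top_eq_card_choose_two, Fintype.card_fin,
    ← SimpleGraph.coe_edgeFinset, Set.ncard_coe_finset]

open scoped Classical in
/-- A set `F` of edges is contained in the random graph with probability `p ^ F.card`; it is only
an inequality because the left-hand side vanishes if `F` contains a loop. -/
lemma gProb_subset_le {n : ℕ} {p : ℝ} (hp : p ∈ Set.Icc (0 : ℝ) 1) (F : Finset (Sym2 (Fin n))) :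
    gProb n p (fun G => ↑F ⊆ G.edgeSet) ≤ p ^ F.card := by
  set U := (⊤ : SimpleGraph (Fin n)).edgeFinset with hU
  have h1 : gProb n p (fun G => ↑F ⊆ G.edgeSet) = ∑ s ∈ U.powerset,
      if F ⊆ s then p ^ s.card * (1 - p) ^ (U.card - s.card) else 0 := by
    rw [gProb, finsum_eq_sum_of_fintype, hU, ← sum_graph_eq_sum_powerset]
    refine Finset.sum_congr rfl fun G _ => ?_
    rw [gWeight_eq, ← SimpleGraph.coe_edgeFinset, Finset.coe_subset]
    congr!
  rw [h1, ← Finset.sum_filter]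
  by_cases hF : F ⊆ U
  · apply le_of_eq
    have h2 := Finset.sum_pow_mul_eq_add_pow p (1 - p) (U \ F)
    rw [add_sub_cancel, one_pow] at h2
    conv_rhs => rw [← mul_one (p ^ F.card), ← h2, Finset.mul_sum]
    refine Finset.sum_nbij' (fun s => s \ F) (fun t => F ∪ t) ?_ ?_ ?_ ?_ ?_
    · intro s hs
      simp only [Finset.mem_filter, Finset.mem_powerset] at hs ⊢
      exact Finset.sdiff_subset_sdiff hs.1 le_rfl
    · intro t ht
      simp only [Finset.mem_filter, Finset.mem_powerset] at ht ⊢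
      exact ⟨Finset.union_subset hF (ht.trans Finset.sdiff_subset), Finset.subset_union_left⟩
    · intro s hs
      simp only [Finset.mem_filter, Finset.mem_powerset] at hs
      exact Finset.union_sdiff_of_subset hs.2
    · intro t ht
      simp only [Finset.mem_powerset] at ht
      exact Finset.union_sdiff_cancel_left (Finset.disjoint_sdiff.mono_right ht)
    · intro s hs
      simp only [Finset.mem_filter, Finset.mem_powerset] at hs
      have h3 := Finset.card_le_card hs.2
      have h4 := Finset.card_le_card hs.1
      rw [Finset.card_sdiff_of_subset hs.2, Finset.card_sdiff_of_subset hF, ← mul_assoc, ← pow_add]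
      congr 2 <;> omega
  · rw [Finset.sum_eq_zero]
    · exact pow_nonneg hp.1 _
    · intro s hs
      simp only [Finset.mem_filter, Finset.mem_powerset] at hs
      exact absurd (hs.2.trans hs.1) hF

lemma gProb_add_gProb_not {n : ℕ} (p : ℝ) (A : SimpleGraph (Fin n) → Prop) :
    gProb n p A + gProb n p (fun G => ¬ A G) = 1 := by
  classical
  have h2 := Finset.sum_pow_mul_eq_add_pow p (1 - p) (⊤ : SimpleGraph (Fin n)).edgeFinset
  rw [add_sub_cancel, one_pow, ← sum_graph_eq_sum_powerset] at h2
  rw [gProb, gProb, finsum_eq_sum_of_fintype, finsum_eq_sum_of_fintype,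
    ← Finset.sum_add_distrib, ← h2]
  refine Finset.sum_congr rfl fun G _ => ?_
  rw [← gWeight_eq]
  by_cases h : A G <;> simp [h]

lemma gProb_nonneg {n : ℕ} {p : ℝ} (hp : p ∈ Set.Icc (0 : ℝ) 1) (A : SimpleGraph (Fin n) → Prop) :
    0 ≤ gProb n p A := by
  classical
  refine finsum_nonneg fun G => ?_
  split_ifs
  exacts [gWeight_nonneg hp G, le_rfl]

/-- Union bound. -/
lemma gProb_le_sum {n : ℕ} {p : ℝ} (hp : p ∈ Set.Icc (0 : ℝ) 1) {A : SimpleGraph (Fin n) → Prop}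
    {ι : Type*} (S : Finset ι) (B : ι → SimpleGraph (Fin n) → Prop)
    (h : ∀ G, A G → ∃ i ∈ S, B i G) : gProb n p A ≤ ∑ i ∈ S, gProb n p (B i) := by
  classical
  simp only [gProb, finsum_eq_sum_of_fintype]
  rw [Finset.sum_comm]
  refine Finset.sum_le_sum fun G _ => ?_
  have hnn : ∀ i ∈ S, 0 ≤ if B i G then gWeight n p G else 0 := fun i _ => by
    split_ifs
    exacts [gWeight_nonneg hp G, le_rfl]
  split_ifs with hA
  · obtain ⟨i, hi, hB⟩ := h G hA
    exact le_trans (by simp [hB]) (Finset.single_le_sum hnn hi)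
  · exact Finset.sum_nonneg hnn

/-! ### The first moment bound and its limit -/

/-- First moment bound: a configuration on `m + 1` vertices is determined by one of `n ^ (m + 1)`
vertex sequences and one of `(m + 1) ^ 2` pairs of chord endpoints, and has `m + 2` edges. -/
lemma gProb_hasPathWithTwoChords_le {n : ℕ} {p : ℝ} (hp : p ∈ Set.Icc (0 : ℝ) 1) :
    gProb n p HasPathWithTwoChords ≤
      p * ∑ m ∈ Finset.range n, ((m + 1 : ℕ) : ℝ) ^ 2 * (p * n) ^ (m + 1) := by
  classical
  let S : Finset (Σ m : ℕ, (Fin (m + 1) → Fin n) × Fin (m + 1) × Fin (m + 1)) :=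
    (Finset.range n).sigma fun m => Finset.univ.filter
      fun t => (chordEdges t.1 t.2.1 t.2.2).card = m + 2
  refine (gProb_le_sum hp S (fun t G => ↑(chordEdges t.2.1 t.2.2.1 t.2.2.2) ⊆ G.edgeSet)
    ?_).trans ?_
  · intro G hG
    obtain ⟨m, hm, f, i, j, hc, hs⟩ := hG.exists_chordEdges
    exact ⟨⟨m, f, i, j⟩, by simp [S, hm, hc], hs⟩
  · rw [Finset.sum_sigma, Finset.mul_sum]
    refine Finset.sum_le_sum fun m _ => ?_
    calc _ ≤ ∑ t ∈ Finset.univ.filter (fun t : (Fin (m + 1) → Fin n) × Fin (m + 1) × Fin (m + 1) =>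
            (chordEdges t.1 t.2.1 t.2.2).card = m + 2), p ^ (m + 2) := by
          refine Finset.sum_le_sum fun t ht => ?_
          rw [← (Finset.mem_filter.1 ht).2]
          exact gProb_subset_le hp _
      _ ≤ ∑ t : (Fin (m + 1) → Fin n) × Fin (m + 1) × Fin (m + 1), p ^ (m + 2) :=
          Finset.sum_le_sum_of_subset_of_nonneg (Finset.filter_subset _ _)
            fun _ _ _ => pow_nonneg hp.1 _
      _ = _ := by
          simp only [Finset.sum_const, Finset.card_univ, Fintype.card_prod, Fintype.card_fun,
            Fintype.card_fin, nsmul_eq_mul]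
          push_cast
          ring

/-- For `0 < c < 1` and `p(n)·n → c`, a.a.s. every connected component of `G(n,p(n))` is
either a tree or a unicyclic graph. -/
theorem aas_components_tree_or_unicyclic (c : ℝ) (hc0 : 0 < c) (hc1 : c < 1)
    (p : ℕ → ℝ) (hp : ∀ n, p n ∈ Set.Icc (0 : ℝ) 1)
    (hpc : Tendsto (fun n : ℕ => p n * n) atTop (𝓝 c)) :
    Tendsto
      (fun n : ℕ => gProb n (p n)
        (fun G => ∀ K : G.ConnectedComponent,
          (G.induce K.supp).IsTree ∨ IsUnicyclic (G.induce K.supp)))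
      atTop (𝓝 1) := by
  obtain ⟨r, hcr, hr1⟩ := exists_between hc1
  have hr0 : 0 < r := hc0.trans hcr
  have hsum : Summable fun k : ℕ => (k : ℝ) ^ 2 * r ^ k :=
    summable_pow_mul_geometric_of_norm_lt_one 2 (by rwa [Real.norm_of_nonneg hr0.le])
  have hsum' := (summable_nat_add_iff 1).2 hsum
  set C : ℝ := ∑' k : ℕ, ((k + 1 : ℕ) : ℝ) ^ 2 * r ^ (k + 1)
  have hp0 : Tendsto p atTop (𝓝 0) := by
    have h := hpc.mul (tendsto_inv_atTop_nhds_zero_nat (𝕜 := ℝ))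
    rw [mul_zero] at h
    refine h.congr' ?_
    filter_upwards [eventually_ne_atTop 0] with n hn
    field_simp
  have hlow : Tendsto (fun n => 1 - p n * C) atTop (𝓝 1) := by
    simpa using tendsto_const_nhds.sub (hp0.mul_const C)
  refine tendsto_of_tendsto_of_tendsto_of_le_of_le' hlow tendsto_const_nhds ?_ ?_
  · filter_upwards [hpc.eventually_lt_const hcr] with n hn
    rw [← gProb_add_gProb_not (p n) fun G => ∀ K : G.ConnectedComponent,
      (G.induce K.supp).IsTree ∨ IsUnicyclic (G.induce K.supp)]
    rw [sub_le_iff_le_add]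
    gcongr
    calc _ ≤ ∑ _i ∈ ({()} : Finset Unit), gProb n (p n) HasPathWithTwoChords :=
          gProb_le_sum (hp n) _ _ fun G hG => ⟨(), by simp, hasPathWithTwoChords_of_component G hG⟩
      _ = gProb n (p n) HasPathWithTwoChords := by simp
      _ ≤ p n * ∑ m ∈ Finset.range n, ((m + 1 : ℕ) : ℝ) ^ 2 * (p n * n) ^ (m + 1) :=
          gProb_hasPathWithTwoChords_le (hp n)
      _ ≤ p n * ∑ m ∈ Finset.range n, ((m + 1 : ℕ) : ℝ) ^ 2 * r ^ (m + 1) := by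
          have := (hp n).1
          gcongr
      _ ≤ p n * C := mul_le_mul_of_nonneg_left
          (hsum'.sum_le_tsum _ fun _ _ => by positivity) (hp n).1
  · refine Eventually.of_forall fun n => ?_
    rw [← gProb_add_gProb_not (p n) fun G => ∀ K : G.ConnectedComponent,
      (G.induce K.supp).IsTree ∨ IsUnicyclic (G.induce K.supp)]
    exact le_add_of_nonneg_right (gProb_nonneg (hp n) _)
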